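/- arXiv:0811.1966 — 2 statements merged into one kernel-verified Lean document; each statement's English description precedes it below -/
import Mathlib

section
/- Let $Y \subseteq \mathbb{T}$ be a symmetric set (i.e., $Y = -Y$) and let $m \in \mathbb{N} \setminus \{0\}$. If $Y \subseteq \mathbb{T}_{4m}$ and $4mY = \{4my \mid y \in Y\}$ is quasi-convex in $\mathbb{T}$, then $Y' = \{\pm \pi(1/(4m))\} \cup Y$ is quasi-convex in $\mathbb{T}$. -/
/-!
Lift a point `x` of the hull of `Y'` to a real `r`, and consider the characters `x ↦ k x`.
Composing a character in the polar of `4mY` with multiplication by `4m` gives one in the polar of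
`Y'`, since `4m` kills `±π(1/(4m))`; hence `4m x ∈ 4mY`, i.e. `r = s + j/(4m)` with `π(s) ∈ Y`,
`|s| ≤ 1/(16m)` and `j` an integer. Multiplication by each `k ≤ m` lies in the polar of `Y'`, which
forces `|r| ≤ 1/(4m)` and so `j ∈ {-1, 0, 1}`. If `j = 0`, then `x ∈ Y`. If `j = ±1`, then
`∓s ≥ 0`, and multiplication by `3m`, again in the polar of `Y'`, sends `x` to `π(3ms ± 3/4)`,
which lies in `𝕋₊` only if `s = 0`, so that `x = ±π(1/(4m))`.
-/

noncomputable section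

/-- The circle group `𝕋 = ℝ/ℤ`. -/
abbrev Circle1 : Type := AddCircle (1 : ℝ)

/-- The canonical projection `π : ℝ → 𝕋`. -/
def circleProj (r : ℝ) : Circle1 := (r : Circle1)

/-- `𝕋₊ = π([-1/4, 1/4])`. -/
def Tplus : Set Circle1 := circleProj '' Set.Icc (-(1/4) : ℝ) (1/4)

/-- The polar `E^▷` of a set `E ⊆ G`: all continuous characters mapping `E` into `𝕋₊`. -/
def polar {G : Type} [AddCommGroup G] [TopologicalSpace G] (E : Set G) :
    Set (G →+ Circle1) :=
  {χ | Continuous χ ∧ ∀ x ∈ E, χ x ∈ Tplus}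

/-- The quasi-convex hull `Q_G(E) = E^▷◁`. -/
def qcHull {G : Type} [AddCommGroup G] [TopologicalSpace G] (E : Set G) : Set G :=
  {x | ∀ χ ∈ polar E, χ x ∈ Tplus}

/-- A set is quasi-convex if it coincides with its quasi-convex hull. -/
def IsQuasiConvex {G : Type} [AddCommGroup G] [TopologicalSpace G] (E : Set G) : Prop :=
  qcHull E = E

/-- For `m ≥ 1`, put `𝕋ₘ = π([-1/(4m), 1/(4m)])`. -/
def Tm (m : ℕ) : Set Circle1 := circleProj '' Set.Icc (-(1 / (4 * (m : ℝ)))) (1 / (4 * (m : ℝ)))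

lemma circleProj_eq_iff (r s : ℝ) : circleProj r = circleProj s ↔ ∃ n : ℤ, r - s = n := by
  unfold circleProj
  rw [← sub_eq_zero, ← AddCircle.coe_sub, AddCircle.coe_eq_zero_iff]
  simp [eq_comm]

lemma circleProj_mem_Tplus (r : ℝ) : circleProj r ∈ Tplus ↔ ∃ n : ℤ, |r - n| ≤ 1 / 4 := by
  constructor
  · rintro ⟨t, ht, h⟩
    obtain ⟨n, hn⟩ := (circleProj_eq_iff _ _).1 h.symm
    exact ⟨n, abs_le.2 ⟨by linarith [ht.1], by linarith [ht.2]⟩⟩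
  · rintro ⟨n, hn⟩
    refine ⟨r - n, abs_le.1 hn, ?_⟩
    rw [circleProj_eq_iff]
    exact ⟨-n, by push_cast; ring⟩

lemma nsmul_circleProj (k : ℕ) (r : ℝ) : k • circleProj r = circleProj (k * r) := by
  unfold circleProj
  rw [← AddCircle.coe_nsmul, nsmul_eq_mul]

lemma neg_circleProj (r : ℝ) : -circleProj r = circleProj (-r) := rfl

/-- The sets `𝕋ₘ` are cut out by the multiples `1, …, m`: if all of `k r` with `1 ≤ k ≤ m` lie in
`𝕋₊` modulo `1`, and `r` is the representative of smallest modulus, then `|r| ≤ 1/(4m)`. -/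
lemma abs_le_of_multiples (r : ℝ) (hr : |r| ≤ 1 / 2) (m : ℕ) (hm : 0 < m)
    (h : ∀ k : ℕ, 1 ≤ k → k ≤ m → circleProj (k * r) ∈ Tplus) : |(m : ℝ) * r| ≤ 1 / 4 := by
  -- A real of modulus at most `1/2` that projects into `𝕋₊` has modulus at most `1/4`.
  have key : ∀ t : ℝ, |t| ≤ 1 / 2 → circleProj t ∈ Tplus → |t| ≤ 1 / 4 := by
    intro t ht hT
    obtain ⟨n, hn⟩ := (circleProj_mem_Tplus t).1 hT
    rw [abs_le] at ht hn
    have h1 : (n : ℝ) < 1 := by linarith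
    have h2 : (-1 : ℝ) < n := by linarith
    have h0 : n = 0 := by
      have h1' : n < 1 := by exact_mod_cast h1
      have h2' : -1 < n := by exact_mod_cast h2
      omega
    subst h0
    simpa [abs_le] using hn
  induction m, hm using Nat.le_induction with
  | base => exact key _ (by simpa using hr) (h 1 le_rfl le_rfl)
  | succ k hk ih =>
    have hk' : (1 : ℝ) ≤ k := by exact_mod_cast hk
    have h1 := ih fun j h1 h2 => h j h1 (by omega)
    refine key _ ?_ (h (k + 1) (by omega) le_rfl)
    rw [abs_mul, Nat.abs_cast] at h1 ⊢
    push_cast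
    nlinarith [abs_nonneg r]

/-- If `Y ⊆ 𝕋_{4m}` is symmetric and `4mY` is quasi-convex in `𝕋`, then
`Y' = {± π(1/(4m))} ∪ Y` is quasi-convex in `𝕋`. -/
theorem stmt18 (Y : Set Circle1) (hsym : Y = -Y) (m : ℕ) (hm : 0 < m)
    (hYm : Y ⊆ Tm (4 * m)) (hqc : IsQuasiConvex ((fun y => (4 * m) • y) '' Y)) :
    IsQuasiConvex ({circleProj (1 / (4 * (m : ℝ))), -circleProj (1 / (4 * (m : ℝ)))} ∪ Y) := by
  have hm0 : (0 : ℝ) < m := by exact_mod_cast hm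
  have hm1 : (m : ℝ) * (1 / (4 * m)) = 1 / 4 := by field_simp
  have hYabs : ∀ y ∈ Y, ∃ s : ℝ, circleProj s = y ∧ |(m : ℝ) * s| ≤ 1 / 16 := by
    intro y hy
    obtain ⟨s, hs, rfl⟩ := hYm hy
    refine ⟨s, rfl, ?_⟩
    have h16 : (m : ℝ) * (1 / (4 * ((4 * m : ℕ) : ℝ))) = 1 / 16 := by
      push_cast; field_simp; norm_num
    rw [abs_mul, Nat.abs_cast, ← h16]
    exact mul_le_mul_of_nonneg_left (abs_le.2 hs) hm0.le
  refine Set.Subset.antisymm ?_ fun x hx χ hχ => hχ.2 x hx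
  intro x hx
  obtain ⟨r, rfl, hr⟩ : ∃ r : ℝ, circleProj r = x ∧ |r| ≤ 1 / 2 := by
    obtain ⟨t, rfl⟩ := QuotientAddGroup.mk_surjective x
    refine ⟨t - round t, ?_, abs_sub_round t⟩
    exact (circleProj_eq_iff _ t).2 ⟨-round t, by push_cast; ring⟩
  -- Multiplication by `k` is in the polar of `Y'` once it maps `±π(1/(4m))` and `Y` into `𝕋₊`.
  have hmul : ∀ k : ℕ, (∃ n : ℤ, |(k : ℝ) * (1 / (4 * m)) - n| ≤ 1 / 4) → k ≤ 4 * m →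
      circleProj (k * r) ∈ Tplus := by
    rintro k ⟨n, hn⟩ hk
    rw [← nsmul_circleProj]
    refine hx (nsmulAddMonoidHom k) ⟨continuous_nsmul k, ?_⟩
    rintro z ((rfl | rfl) | hz)
    · rw [nsmulAddMonoidHom_apply, nsmul_circleProj, circleProj_mem_Tplus]
      exact ⟨n, hn⟩
    · rw [nsmulAddMonoidHom_apply, neg_circleProj, nsmul_circleProj, circleProj_mem_Tplus]
      refine ⟨-n, ?_⟩
      rw [← abs_neg]
      convert hn using 2
      push_cast; ring
    · obtain ⟨s, rfl, hs⟩ := hYabs z hz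
      rw [nsmulAddMonoidHom_apply, nsmul_circleProj, circleProj_mem_Tplus]
      refine ⟨0, ?_⟩
      have hk' : (k : ℝ) ≤ 4 * m := by exact_mod_cast hk
      rw [Int.cast_zero, sub_zero]
      rw [abs_mul, Nat.abs_cast] at hs ⊢
      nlinarith [mul_le_mul_of_nonneg_right hk' (abs_nonneg s)]
  have hr4 : |(m : ℝ) * r| ≤ 1 / 4 := by
    refine abs_le_of_multiples r hr m hm fun k _ hk => hmul k ⟨0, ?_⟩ (by omega)
    have hk' : (k : ℝ) ≤ m := by exact_mod_cast hk
    rw [Int.cast_zero, sub_zero, abs_of_nonneg (by positivity), ← hm1]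
    exact mul_le_mul_of_nonneg_right hk' (by positivity)
  -- For `k = 3m` the point `1/(4m)` goes to `3/4`, at distance `1/4` from the integer `1`.
  have h3 : circleProj ((3 * m : ℕ) * r) ∈ Tplus := by
    refine hmul (3 * m) ⟨1, ?_⟩ (by omega)
    push_cast
    rw [mul_assoc, hm1]
    norm_num [abs_le]
  rw [circleProj_mem_Tplus] at h3
  have h4 : (4 * m) • circleProj r ∈ (fun y => (4 * m) • y) '' Y := by
    rw [← hqc]
    intro χ hχ
    refine hx (χ.comp (nsmulAddMonoidHom (4 * m))) ⟨hχ.1.comp (continuous_nsmul _), ?_⟩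
    have hz : (4 * m) • circleProj (1 / (4 * (m : ℝ))) = 0 := by
      have h41 : ((4 * m : ℕ) : ℝ) * (1 / (4 * m)) = 1 := by push_cast; field_simp
      rw [nsmul_circleProj, h41]
      exact AddCircle.coe_period 1
    have h0 : (0 : Circle1) ∈ Tplus := ⟨0, by norm_num, rfl⟩
    rintro z ((rfl | rfl) | hzY)
    · change χ ((4 * m) • (_ : Circle1)) ∈ Tplus
      rwa [hz, map_zero]
    · change χ ((4 * m) • (_ : Circle1)) ∈ Tplus
      rwa [smul_neg, hz, neg_zero, map_zero]
    · exact hχ.2 _ ⟨z, hzY, rfl⟩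
  obtain ⟨y, hy, hyr⟩ := h4
  obtain ⟨s, rfl, hs⟩ := hYabs y hy
  change (4 * m) • circleProj s = (4 * m) • circleProj r at hyr
  rw [nsmul_circleProj, nsmul_circleProj, eq_comm, circleProj_eq_iff] at hyr
  obtain ⟨j, hj⟩ := hyr
  obtain ⟨n, hn⟩ := h3
  push_cast at hj hn
  rw [abs_le] at hs hr4 hn
  have hj1 : j < 2 := by
    have : (j : ℝ) < 2 := by linarith
    exact_mod_cast this
  have hj2 : -2 < j := by
    have : (-2 : ℝ) < j := by linarith
    exact_mod_cast this
  have hcancel : ∀ t : ℝ, (m : ℝ) * r = m * t → circleProj r = circleProj t := fun t ht => by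
    rw [mul_left_cancel₀ hm0.ne' ht]
  obtain rfl | rfl | rfl : j = -1 ∨ j = 0 ∨ j = 1 := by omega
  · left; right
    rw [Set.mem_singleton_iff, neg_circleProj]
    push_cast at hj
    have hn0 : n < 0 := by
      have : (n : ℝ) < 0 := by linarith
      exact_mod_cast this
    have hn1 : (n : ℝ) ≤ -1 := by exact_mod_cast (by omega : n ≤ -1)
    exact hcancel _ (by rw [mul_neg, hm1]; linarith)
  · right
    push_cast at hj
    rwa [hcancel s (by linarith)]
  · left; left
    push_cast at hj
    have hn0 : 0 < n := by
      have : (0 : ℝ) < n := by linarith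
      exact_mod_cast this
    have hn1 : (1 : ℝ) ≤ n := by exact_mod_cast (by omega : 1 ≤ n)
    exact hcancel _ (by rw [hm1]; linarith)
end
end

section
/- Let $\underline{a}=\{a_n\}_{n=0}^\infty$ be an increasing sequence of non-negative integers with gaps $g_n = a_{n+1} - a_n$, and put $x_n = 2^{-(a_n+1)}$ (viewed in $\mathbb{T}=\mathbb{R}/\mathbb{Z}$). Suppose that $a_0 > 0$, $g_0 = 1$, $g_1 > 2$, and $g_n > 1$ for all $n \geq 2$. Then $K_{\underline{a},2} = \{0\} \cup \{\pm x_n \mid n \in \mathbb{N}\}$ is quasi-convex in $\mathbb{T}$. -/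
/-!
Multiplication by an integer `c` is a character of `𝕋`, so a point `π r` of the hull satisfies
`c r ∈ [-1/4, 1/4] + ℤ` for every integer `c` with `c xₙ ∈ 𝕋₊` for all `n`. The proof exhibits
enough such `c`.

Write `a₀ = b + 1`, `a₁ = b + 2`, `aᵢ₊₂ = b + 5 + pᵢ`, so that `pᵢ₊₁ ≥ pᵢ + 2`. The characters `2ᵐ`
with `m ≤ b` force `|2ᵇ r| ≤ 1/4` when `|r| ≤ 1/4`. Put `U = 2ᵇ r`; it remains to show that `U` is
`0`, `±1/4`, `±1/8` or `±2^{-(pᵢ+6)}` (`core`).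

* The character `8` gives `8 U = k + y` with `k` an integer and `|y| ≤ 1/4`. As long as no multiple
  `2ᵐ y` leaves `[-1/4, 1/4]`, doubling is exact; if it never leaves, then `y = 0`. The character
  `8 · 2ᵐ` is available unless `m = pᵢ + 2`. At such a place, `3 · 8 · 2^{pᵢ+1}` shows that
  `|2^{pᵢ+1} y|` is either at most `1/12`, so that doubling stays exact, or equal to `1/4`.
  Hence `y = 0` or `|y| = 2^{-(pᵢ+3)}` for some `i` (`tail_dichotomy`).
* By symmetry `U ≥ 0`, so `k ∈ {0, 1, 2}`. For `k = 0` nothing is left to prove, for `k = 2` the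
  character `7` forces `y = 0`, and for `k = 1` a nonzero `y` is excluded by `2^{pᵢ+4} - 7`
  (if `y > 0`) or `2^{pᵢ+4} - 1` (if `y < 0`).
-/

noncomputable section

/-! ### Real representatives of `𝕋₊` -/

/-- The real number `r` represents an element of `𝕋₊`. -/
def InT (r : ℝ) : Prop := ∃ k : ℤ, |r - k| ≤ 1 / 4

lemma circleProj_mem_Tplus_s19 (r : ℝ) : circleProj r ∈ Tplus ↔ InT r := by
  constructor
  · rintro ⟨s, hs, h⟩
    have h' : ((r - s : ℝ) : Circle1) = 0 := by
      rw [AddCircle.coe_sub]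
      exact sub_eq_zero.2 h.symm
    obtain ⟨k, hk⟩ := (AddCircle.coe_eq_zero_iff (1 : ℝ)).1 h'
    refine ⟨k, ?_⟩
    have hk' : (k : ℝ) = r - s := by simpa using hk
    rw [hk', abs_le]
    constructor <;> linarith [hs.1, hs.2]
  · rintro ⟨k, hk⟩
    rw [abs_le] at hk
    refine ⟨r - k, ⟨by linarith [hk.1], hk.2⟩, ?_⟩
    have h' : ((k : ℝ) : Circle1) = 0 := (AddCircle.coe_eq_zero_iff (1 : ℝ)).2 ⟨k, by simp⟩
    change ((r - k : ℝ) : Circle1) = (r : Circle1)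
    rw [AddCircle.coe_sub, h', sub_zero]

lemma InT.of_abs {r : ℝ} (h : |r| ≤ 1 / 4) : InT r := ⟨0, by simpa using h⟩

lemma InT.int_add {r : ℝ} (z : ℤ) (h : InT r) : InT (z + r) := by
  obtain ⟨k, hk⟩ := h
  refine ⟨z + k, ?_⟩
  push_cast
  rwa [add_sub_add_left_eq_sub]

lemma InT.int (z : ℤ) : InT z := ⟨z, by simp⟩

lemma InT.neg {r : ℝ} (h : InT r) : InT (-r) := by
  obtain ⟨k, hk⟩ := h
  refine ⟨-k, ?_⟩
  rw [← abs_neg]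
  convert hk using 2
  push_cast
  ring

lemma InT.abs_le {r : ℝ} (h : InT r) (hr : |r| < 3 / 4) : |r| ≤ 1 / 4 := by
  obtain ⟨k, hk⟩ := h
  have h1 := abs_lt.1 hr
  have h2 := _root_.abs_le.1 hk
  have h3 : k < 1 := by
    have : (k : ℝ) < (1 : ℤ) := by push_cast; linarith
    exact_mod_cast this
  have h4 : -1 < k := by
    have : ((-1 : ℤ) : ℝ) < k := by push_cast; linarith
    exact_mod_cast this
  obtain rfl : k = 0 := by omega
  simpa using hk

lemma not_InT {r : ℝ} (h1 : 1 / 4 < r) (h2 : r < 3 / 4) : ¬ InT r := fun h => by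
  have := h.abs_le (by rw [abs_lt]; constructor <;> linarith)
  have := le_abs_self r
  linarith

/-! ### Integer characters in the polar -/

/-- `2^m / 2^n` is an integer for `n ≤ m`. -/
lemma two_pow_div_int {m n : ℕ} (h : n ≤ m) : ∃ z : ℤ, (2 : ℝ) ^ m / 2 ^ n = z := by
  obtain ⟨d, rfl⟩ := Nat.exists_eq_add_of_le h
  refine ⟨2 ^ d, ?_⟩
  rw [pow_add]
  field_simp
  push_cast
  ring

/-- `2^m / 2^n ≤ 2^{-d}` for `m + d ≤ n`. -/
lemma two_pow_div_le {m n : ℕ} (d : ℕ) (h : m + d ≤ n) : (2 : ℝ) ^ m / 2 ^ n ≤ 1 / 2 ^ d := by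
  rw [div_le_div_iff₀ (by positivity) (by positivity), one_mul, ← pow_add]
  exact pow_le_pow_right₀ (by norm_num) h

/-- Trichotomy for a sequence with gaps at least two. -/
lemma gap_cases {p : ℕ → ℕ} (hp : ∀ i, p i + 2 ≤ p (i + 1)) (i j : ℕ) :
    p j + 2 ≤ p i ∨ j = i ∨ p i + 2 ≤ p j := by
  have hm : StrictMono p := strictMono_nat_of_lt_succ fun i => by have := hp i; omega
  rcases lt_trichotomy j i with h | h | h
  · exact Or.inl ((hp j).trans (hm.monotone h))
  · exact Or.inr (Or.inl h)
  · exact Or.inr (Or.inr ((hp i).trans (hm.monotone h)))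

/-- Every integer `c`, viewed as a character, that sends `1/4`, `1/8` and all `2^{-(pᵢ+6)}` into
`𝕋₊` also sends `U` into `𝕋₊`. The points are the `xₙ` rescaled by `2ᵇ`. -/
def Hull (p : ℕ → ℕ) (U : ℝ) : Prop :=
  ∀ c : ℤ, InT (c / 4) → InT (c / 8) → (∀ i, InT (c / 2 ^ (p i + 6))) → InT (c * U)

/-- The character `8 · 2^m`, which sends `1/2^{pᵢ+6}` to `1/2` exactly when `m = pᵢ + 2`. -/
lemma Hull.eight_pow {p : ℕ → ℕ} {U : ℝ} (H : Hull p U) (m : ℕ) (hm : ∀ i, m ≠ p i + 2) :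
    InT (2 ^ m * (8 * U)) := by
  have := H (2 ^ m * 8) ?_ ?_ ?_
  · push_cast at this
    rwa [mul_assoc] at this
  · convert InT.int (2 ^ m * 2) using 1
    push_cast; ring
  · convert InT.int (2 ^ m) using 1
    push_cast; ring
  · intro i
    have e : (((2 ^ m * 8 : ℤ) : ℝ)) / 2 ^ (p i + 6) = 2 ^ m / 2 ^ (p i + 3) := by
      push_cast; rw [pow_add, pow_add]; field_simp; norm_num
    rw [e]
    rcases lt_or_gt_of_ne (hm i) with h | h
    · apply InT.of_abs
      rw [abs_of_nonneg (by positivity)]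
      exact (two_pow_div_le 2 (by omega)).trans (by norm_num)
    · obtain ⟨z, hz⟩ := two_pow_div_int (show p i + 3 ≤ m by omega)
      rw [hz]
      exact InT.int z

/-- The character `3 · 8 · 2^{pᵢ+1}`, which sends `1/2^{pᵢ+6}` to `3/4`, hence into `𝕋₊`; the gaps of
size at least two take care of the other points. -/
lemma Hull.three {p : ℕ → ℕ} (hp : ∀ i, p i + 2 ≤ p (i + 1)) {U : ℝ} (H : Hull p U) (i : ℕ) :
    InT (3 * (2 ^ (p i + 1) * (8 * U))) := by
  have := H (3 * 2 ^ (p i + 1) * 8) ?_ ?_ ?_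
  · push_cast at this
    convert this using 1
    ring
  · convert InT.int (3 * 2 ^ (p i + 1) * 2) using 1
    push_cast; ring
  · convert InT.int (3 * 2 ^ (p i + 1)) using 1
    push_cast; ring
  · intro j
    have e : (((3 * 2 ^ (p i + 1) * 8 : ℤ) : ℝ)) / 2 ^ (p j + 6)
        = 3 * (2 ^ (p i + 1) / 2 ^ (p j + 3)) := by
      push_cast; rw [pow_add _ (p j), pow_add _ (p j)]; field_simp; norm_num
    rw [e]
    rcases gap_cases hp i j with h | rfl | h
    · obtain ⟨z, hz⟩ := two_pow_div_int (show p j + 3 ≤ p i + 1 by omega)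
      rw [hz]
      exact_mod_cast InT.int (3 * z)
    · refine ⟨1, ?_⟩
      have : (2 : ℝ) ^ (p j + 1) / 2 ^ (p j + 3) = 1 / 4 := by
        rw [pow_add, pow_add]; field_simp; norm_num
      rw [this]
      norm_num
    · apply InT.of_abs
      rw [abs_of_nonneg (by positivity)]
      have := two_pow_div_le (m := p i + 1) (n := p j + 3) 4 (by omega)
      norm_num at this ⊢
      linarith

/-- The characters `2^{pᵢ+4} - q` with `q ∈ {1, 7}`. -/
lemma Hull.sub {p : ℕ → ℕ} (hp : ∀ i, p i + 2 ≤ p (i + 1)) {U : ℝ} (H : Hull p U) (i : ℕ)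
    (q : ℤ) (hq : q = 1 ∨ q = 7) : InT ((2 ^ (p i + 4) - q) * U) := by
  have hq0 : (0 : ℝ) ≤ q := by rcases hq with rfl | rfl <;> norm_num
  have hq7 : (q : ℝ) ≤ 7 := by rcases hq with rfl | rfl <;> norm_num
  have := H (2 ^ (p i + 4) - q) ?_ ?_ ?_
  · exact_mod_cast this
  · have : InT (-(q / 4 : ℝ)) := by
      rcases hq with rfl | rfl
      · exact ⟨0, by norm_num⟩
      · exact ⟨-2, by norm_num [abs_le]⟩
    convert this.int_add (2 ^ (p i + 2)) using 1
    push_cast; ring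
  · have : InT (-(q / 8 : ℝ)) := by
      rcases hq with rfl | rfl
      · exact ⟨0, by norm_num [abs_le]⟩
      · exact ⟨-1, by norm_num [abs_le]⟩
    convert this.int_add (2 ^ (p i + 1)) using 1
    push_cast; ring
  · intro j
    have e : (((2 ^ (p i + 4) - q : ℤ) : ℝ)) / 2 ^ (p j + 6)
        = 2 ^ (p i + 4) / 2 ^ (p j + 6) + -(q / 2 ^ (p j + 6)) := by
      push_cast; ring
    have b1 : (q : ℝ) / 2 ^ (p j + 6) ≤ 7 / 64 := by
      have h64 : (64 : ℝ) ≤ 2 ^ (p j + 6) := by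
        calc (64 : ℝ) = 2 ^ 6 := by norm_num
          _ ≤ _ := pow_le_pow_right₀ (by norm_num) (by omega)
      exact div_le_div₀ (by norm_num) hq7 (by norm_num) h64
    have b0 : (0 : ℝ) ≤ q / 2 ^ (p j + 6) := by positivity
    rw [e]
    rcases gap_cases hp i j with h | rfl | h
    · obtain ⟨z, hz⟩ := two_pow_div_int (show p j + 6 ≤ p i + 4 by omega)
      rw [hz]
      apply InT.int_add
      apply InT.of_abs
      rw [abs_le]
      constructor <;> linarith
    · have b2 := two_pow_div_le (m := p j + 4) (n := p j + 6) 2 (by omega)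
      have b3 : (0 : ℝ) ≤ 2 ^ (p j + 4) / 2 ^ (p j + 6) := by positivity
      apply InT.of_abs
      rw [abs_le]
      constructor <;> linarith
    · have b2 := two_pow_div_le (m := p i + 4) (n := p j + 6) 2 (by omega)
      have b3 : (0 : ℝ) ≤ 2 ^ (p i + 4) / 2 ^ (p j + 6) := by positivity
      apply InT.of_abs
      rw [abs_le]
      constructor <;> linarith

lemma Hull.seven {p : ℕ → ℕ} {U : ℝ} (H : Hull p U) : InT (7 * U) := by
  have := H 7 ⟨2, by norm_num [abs_le]⟩ ⟨1, by norm_num [abs_le]⟩ fun i => ?_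
  · exact_mod_cast this
  · apply InT.of_abs
    have := two_pow_div_le (m := 0) (n := p i + 6) 6 (by omega)
    have h0 : (0 : ℝ) ≤ 2 ^ 0 / 2 ^ (p i + 6) := by positivity
    have e : ((7 : ℤ) : ℝ) / 2 ^ (p i + 6) = 7 * (2 ^ 0 / 2 ^ (p i + 6)) := by
      push_cast; ring
    rw [e, abs_of_nonneg (by positivity)]
    norm_num at this ⊢
    linarith

/-! ### Points with all the required multiples in `𝕋₊` -/

/-- If `|2^m y|` stays bounded by `1/4` for all `m`, then `y = 0`. -/
lemma eq_zero_of_pow_bounded {y : ℝ} (h : ∀ m : ℕ, |2 ^ m * y| ≤ 1 / 4) : y = 0 := by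
  by_contra hy
  have hpos : 0 < |y| := abs_pos.2 hy
  obtain ⟨m, hm⟩ := pow_unbounded_of_one_lt (1 / |y|) (one_lt_two (α := ℝ))
  have := h m
  rw [abs_mul, abs_of_nonneg (by positivity : (0 : ℝ) ≤ 2 ^ m)] at this
  rw [div_lt_iff₀ hpos] at hm
  linarith

/-- The fractional part `y` of `8 U`, taken in `[-1/4, 1/4]`, is zero or corresponds to one
of the points `xᵢ₊₂`. -/
lemma Hull.tail_dichotomy {p : ℕ → ℕ} (hp : ∀ i, p i + 2 ≤ p (i + 1)) {U y : ℝ} (H : Hull p U)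
    {k : ℤ} (hk : 8 * U = k + y) (hy : |y| ≤ 1 / 4) :
    y = 0 ∨ ∃ i, |2 ^ (p i + 1) * y| = 1 / 4 := by
  by_contra! hcon
  obtain ⟨hy0, hne⟩ := hcon
  refine hy0 (eq_zero_of_pow_bounded fun m => ?_)
  induction m with
  | zero => simpa using hy
  | succ m ih =>
    have hd : (2 : ℝ) ^ (m + 1) * y = 2 * (2 ^ m * y) := by ring
    have ih' := abs_le.1 ih
    by_cases hm : ∃ i, m + 1 = p i + 2
    · obtain ⟨i, hi⟩ := hm
      obtain rfl : m = p i + 1 := by omega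
      have h3 := (H.three hp i).int_add (-(3 * 2 ^ (p i + 1) * k))
      have e : ((-(3 * 2 ^ (p i + 1) * k) : ℤ) : ℝ) + 3 * (2 ^ (p i + 1) * (8 * U))
          = 3 * (2 ^ (p i + 1) * y) := by
        rw [hk]; push_cast; ring
      rw [e] at h3
      have hlt : |2 ^ (p i + 1) * y| < 1 / 4 := lt_of_le_of_ne ih (hne i)
      -- Since `|2^{pᵢ+1} y| < 1/4`, its triple avoids `±3/4`, so the triple is at most `1/4`.
      have h4 := h3.abs_le (by rw [abs_mul, abs_of_pos (by norm_num : (0 : ℝ) < 3)]; linarith)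
      rw [abs_le] at h4
      rw [hd, abs_le]
      constructor <;> linarith
    · push Not at hm
      have h3 := (H.eight_pow (m + 1) hm).int_add (-(2 ^ (m + 1) * k))
      have e : ((-(2 ^ (m + 1) * k) : ℤ) : ℝ) + 2 ^ (m + 1) * (8 * U) = 2 ^ (m + 1) * y := by
        rw [hk]; push_cast; ring
      rw [e] at h3
      refine h3.abs_le ?_
      rw [hd, abs_lt]
      constructor <;> linarith

/-- The case `U ≥ 0` of `core`, by cases on the integer nearest to `8 U`. -/
lemma core_nonneg {p : ℕ → ℕ} (hp : ∀ i, p i + 2 ≤ p (i + 1)) {U : ℝ} (H : Hull p U)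
    (hU0 : 0 ≤ U) (hU : U ≤ 1 / 4) :
    U = 0 ∨ U = 1 / 4 ∨ U = 1 / 8 ∨ ∃ i, U = 1 / 2 ^ (p i + 6) := by
  obtain ⟨k, hk⟩ : InT (8 * U) := by
    simpa using H.eight_pow 0 (fun i => by omega)
  obtain ⟨y, hy⟩ : ∃ y, y = 8 * U - k := ⟨_, rfl⟩
  rw [← hy] at hk
  have hUk : 8 * U = k + y := by linarith
  have hyb := abs_le.1 hk
  have k0 : -1 < k := by
    have : ((-1 : ℤ) : ℝ) < k := by push_cast; linarith
    exact_mod_cast this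
  have k3 : k < 3 := by
    have : (k : ℝ) < (3 : ℤ) := by push_cast; linarith
    exact_mod_cast this
  -- The alternative `y = ±2^{-(pᵢ+3)}` is written without division.
  have key : y = 0 ∨ ∃ i, 2 ^ (p i + 3) * |y| = 1 := by
    refine (H.tail_dichotomy hp hUk hk).imp_right fun ⟨i, hi⟩ => ⟨i, ?_⟩
    rw [abs_mul, abs_of_nonneg (by positivity : (0 : ℝ) ≤ 2 ^ (p i + 1))] at hi
    have : (2 : ℝ) ^ (p i + 3) = 4 * 2 ^ (p i + 1) := by ring
    rw [this]; linarith
  have hk' : k = 0 ∨ k = 1 ∨ k = 2 := by omega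
  rcases hk' with rfl | rfl | rfl
  · push_cast at hUk
    rcases key with h | ⟨i, hi⟩
    · left; linarith
    · right; right; right
      refine ⟨i, ?_⟩
      have hy0 : 0 ≤ y := by linarith
      rw [abs_of_nonneg hy0] at hi
      rw [eq_div_iff (by positivity)]
      have : (2 : ℝ) ^ (p i + 6) = 2 ^ (p i + 3) * 8 := by ring
      rw [this]
      calc U * (2 ^ (p i + 3) * 8) = 2 ^ (p i + 3) * (8 * U) := by ring
        _ = 1 := by rw [hUk, zero_add, hi]
  · push_cast at hUk
    right; right; left
    rcases key with h | ⟨i, hi⟩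
    · linarith
    · exfalso
      have h8 : (8 : ℝ) ≤ 2 ^ (p i + 3) := by
        calc (8 : ℝ) = 2 ^ 3 := by norm_num
          _ ≤ _ := pow_le_pow_right₀ (by norm_num) (by omega)
      have hy8 : |y| ≤ 1 / 8 := by nlinarith [abs_nonneg y]
      have hyb' := abs_le.1 hy8
      have h24 : (2 : ℝ) ^ (p i + 4) = 2 * 2 ^ (p i + 3) := by ring
      rcases le_total 0 y with h0 | h0
      · rw [abs_of_nonneg h0] at hi
        have h7 := (H.sub hp i 7 (Or.inr rfl)).int_add (1 - 2 ^ (p i + 1))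
        have e : ((1 - 2 ^ (p i + 1) : ℤ) : ℝ) + (2 ^ (p i + 4) - (7 : ℤ)) * U
            = 3 / 8 - 7 / 8 * y := by
          have hU' : U = (1 + y) / 8 := by linarith
          rw [hU']
          push_cast
          have : (2 : ℝ) ^ (p i + 3) = 4 * 2 ^ (p i + 1) := by ring
          rw [h24]
          linear_combination (1 / 4) * hi + (1 / 4) * this
        rw [e] at h7
        exact not_InT (by linarith) (by linarith) h7
      · rw [abs_of_nonpos h0] at hi
        have h7 := ((H.sub hp i 1 (Or.inl rfl)).int_add (-2 ^ (p i + 1))).neg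
        have e : -(((-2 ^ (p i + 1) : ℤ) : ℝ) + (2 ^ (p i + 4) - (1 : ℤ)) * U)
            = 3 / 8 + 1 / 8 * y := by
          have hU' : U = (1 + y) / 8 := by linarith
          rw [hU']
          push_cast
          have : (2 : ℝ) ^ (p i + 3) = 4 * 2 ^ (p i + 1) := by ring
          rw [h24]
          linear_combination (1 / 4) * hi - (1 / 4) * this
        rw [e] at h7
        exact not_InT (by linarith) (by linarith) h7
  · push_cast at hUk
    right; left
    -- Here `y ≤ 0`, and `2 - 7 U = 1/4 - 7 y / 8` must not exceed `1/4`.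
    have h7 := (H.seven.neg.int_add 2).abs_le (by
      rw [abs_lt]; push_cast; constructor <;> linarith)
    rw [abs_le] at h7
    push_cast at h7
    linarith [h7.1, h7.2]

lemma core {p : ℕ → ℕ} (hp : ∀ i, p i + 2 ≤ p (i + 1)) {U : ℝ} (H : Hull p U)
    (hU : |U| ≤ 1 / 4) :
    |U| = 0 ∨ |U| = 1 / 4 ∨ |U| = 1 / 8 ∨ ∃ i, |U| = 1 / 2 ^ (p i + 6) := by
  refine core_nonneg hp (fun c h1 h2 h3 => ?_) (abs_nonneg U) hU
  have := H c h1 h2 h3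
  rcases abs_choice U with h | h
  · rwa [h]
  · rw [h, mul_neg]
    exact this.neg

/-! ### From the circle to real representatives -/

/-- The part of the hull of `K_{a,2}` detected by integer characters. -/
lemma InT_of_mem_hull {a : ℕ → ℕ} {r : ℝ}
    (hr : circleProj r ∈ qcHull ({0} ∪ {x : Circle1 | ∃ n : ℕ,
        x = circleProj (((2 : ℝ) ^ (a n + 1))⁻¹) ∨
        x = -circleProj (((2 : ℝ) ^ (a n + 1))⁻¹)})) (c : ℤ)
    (hc : ∀ n, InT (c / 2 ^ (a n + 1))) : InT (c * r) := by
  have hmul : ∀ s : ℝ, c • circleProj s = circleProj (c * s) := fun s => by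
    change c • (s : Circle1) = ((c * s : ℝ) : Circle1)
    rw [← AddCircle.coe_zsmul, zsmul_eq_mul]
  rw [← circleProj_mem_Tplus_s19, ← hmul]
  refine hr (zsmulAddGroupHom c) ⟨continuous_zsmul c, ?_⟩
  rintro x (rfl | ⟨n, rfl | rfl⟩)
  · rw [map_zero]
    exact (circleProj_mem_Tplus_s19 0).2 (InT.of_abs (by norm_num))
  · change c • circleProj _ ∈ Tplus
    rw [hmul, circleProj_mem_Tplus_s19]
    exact hc n
  · change c • (-circleProj _) ∈ Tplus
    rw [smul_neg, hmul]
    change circleProj (-_) ∈ Tplus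
    rw [circleProj_mem_Tplus_s19]
    exact (hc n).neg

/-- If `a₀ > 0`, `g₀ = 1`, `g₁ > 2`, and `gₙ > 1` for all `n ≥ 2`, then
`K_{a,2}` is quasi-convex in `𝕋`. -/
theorem stmt19 (a : ℕ → ℕ) (ha : StrictMono a)
    (h0 : 0 < a 0) (hg0 : a 1 - a 0 = 1) (hg1 : 2 < a 2 - a 1)
    (hg : ∀ n : ℕ, 2 ≤ n → 1 < a (n + 1) - a n) :
    IsQuasiConvex ({0} ∪ {x : Circle1 | ∃ n : ℕ,
        x = circleProj (((2 : ℝ) ^ (a n + 1))⁻¹) ∨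
        x = -circleProj (((2 : ℝ) ^ (a n + 1))⁻¹)}) := by
  refine Set.Subset.antisymm (fun x hx => ?_) (fun x hx χ hχ => hχ.2 x hx)
  obtain ⟨b, hb⟩ : ∃ b, a 0 = b + 1 := ⟨a 0 - 1, by omega⟩
  have hb1 : a 1 = b + 2 := by omega
  obtain ⟨p, hpa⟩ : ∃ p : ℕ → ℕ, ∀ i, a (i + 2) = b + 5 + p i := by
    refine ⟨fun i => a (i + 2) - (b + 5), fun i => ?_⟩
    have : a 2 ≤ a (i + 2) := ha.monotone (by omega)
    dsimp only
    omega
  have hp : ∀ i, p i + 2 ≤ p (i + 1) := fun i => by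
    have h1 := hg (i + 2) (by omega)
    have h2 := hpa i
    have h3 : a (i + 2 + 1) = _ := hpa (i + 1)
    omega
  -- A representative in `[-1/4, 1/4]`, by the identity character.
  obtain ⟨r, hr, rfl⟩ : ∃ r : ℝ, |r| ≤ 1 / 4 ∧ circleProj r = x := by
    obtain ⟨s, rfl⟩ := QuotientAddGroup.mk_surjective x
    have h1 : InT ((1 : ℤ) * s) := InT_of_mem_hull hx 1 fun n => by
      apply InT.of_abs
      have hn : a 0 ≤ a n := ha.monotone (Nat.zero_le n)
      have := two_pow_div_le (m := 0) (n := a n + 1) 2 (by omega)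
      rw [abs_of_nonneg (by positivity)]
      norm_num at this ⊢
      linarith
    have h2 : circleProj s ∈ Tplus := (circleProj_mem_Tplus_s19 s).2 (by simpa using h1)
    obtain ⟨r, hr, h⟩ := h2
    exact ⟨r, abs_le.2 ⟨by linarith [hr.1], hr.2⟩, h⟩
  -- Below `a 0`, all powers of two are admissible characters, so doubling is exact up to `2^b`.
  have hdbl : ∀ m ≤ b, |2 ^ m * r| ≤ 1 / 4 := by
    intro m
    induction m with
    | zero => intro _; simpa using hr
    | succ m ih =>
      intro hm
      have h1 := abs_le.1 (ih (by omega))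
      have h2 : InT (((2 ^ (m + 1) : ℤ) : ℝ) * r) := InT_of_mem_hull hx _ fun n => by
        apply InT.of_abs
        have hn : a 0 ≤ a n := ha.monotone (Nat.zero_le n)
        have := two_pow_div_le (m := m + 1) (n := a n + 1) 2 (by omega)
        push_cast
        rw [abs_of_nonneg (by positivity)]
        norm_num at this ⊢
        linarith
      push_cast at h2
      refine h2.abs_le ?_
      rw [pow_succ, abs_lt]
      constructor <;> linarith
  have H : Hull p (2 ^ b * r) := by
    intro c h4 h8 hi
    have := InT_of_mem_hull hx (c * 2 ^ b) fun n => by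
      have hcancel : ∀ d : ℕ, (((c * 2 ^ b : ℤ) : ℝ)) / 2 ^ (b + d) = c / 2 ^ d := fun d => by
        push_cast; rw [pow_add]; field_simp
      match n with
      | 0 => rw [hb, add_assoc, hcancel]; norm_num; exact h4
      | 1 => rw [hb1, add_assoc, hcancel]; norm_num; exact h8
      | i + 2 =>
        rw [hpa, show b + 5 + p i + 1 = b + (p i + 6) by omega, hcancel]; exact hi i
    push_cast at this
    rwa [mul_assoc] at this
  have habs : |2 ^ b * r| = 2 ^ b * |r| := by
    rw [abs_mul, abs_of_nonneg (by positivity : (0 : ℝ) ≤ 2 ^ b)]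
  have hfin : ∀ n d : ℕ, a n + 1 = b + d → 2 ^ b * |r| = 1 / 2 ^ d →
      circleProj r ∈ ({0} ∪ {x : Circle1 | ∃ n : ℕ,
        x = circleProj (((2 : ℝ) ^ (a n + 1))⁻¹) ∨
        x = -circleProj (((2 : ℝ) ^ (a n + 1))⁻¹)}) := by
    intro n d hn h
    have h' : |r| = ((2 : ℝ) ^ (a n + 1))⁻¹ := by
      rw [hn, pow_add]
      field_simp at h ⊢
      linarith
    refine Or.inr ⟨n, ?_⟩
    rcases eq_or_eq_neg_of_abs_eq h' with h | h
    · left; rw [h]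
    · right; rw [h]; rfl
  have hcore := core hp H (hdbl b le_rfl)
  rw [habs] at hcore
  rcases hcore with h | h | h | ⟨i, h⟩
  · left
    have : r = 0 := by
      have h2 : (2 : ℝ) ^ b ≠ 0 := by positivity
      simpa [h2] using h
    rw [this]
    rfl
  · exact hfin 0 2 (by omega) (by rw [h]; norm_num)
  · exact hfin 1 3 (by omega) (by rw [h]; norm_num)
  · exact hfin (i + 2) (p i + 6) (by rw [hpa]; omega) h
end
end
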